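/- Let A be a unital complex C*-algebra and H a uniformly bounded subgroup of Aˣ (sup_{h∈H} ‖h‖ < ∞). Then the orbit diameter function D_H(a) = sup_{h∈H} d(a, h a h*) is geodesically convex: for all positive invertible a, b and all t ∈ [0,1], D_H(γ_{a,b}(t)) ≤ (1−t)·D_H(a) + t·D_H(b), where γ_{a,b}(t) = a^{1/2}(a^{-1/2} b a^{-1/2})^t a^{1/2} and d(x,y) = ‖log(x^{-1/2} y x^{-1/2})‖. -/

import Mathlib

/-- An element of a unital C*-algebra is *positive invertible* if it is self-adjoint
with spectrum contained in `(0, ∞)`. -/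
def IsPosInv {A : Type*} [CStarAlgebra A] (a : A) : Prop :=
  IsSelfAdjoint a ∧ spectrum ℝ a ⊆ Set.Ioi (0 : ℝ)

/-- Real powers `a ^ t` defined by the continuous functional calculus. -/
noncomputable def cpow {A : Type*} [CStarAlgebra A] (a : A) (t : ℝ) : A :=
  cfc (fun x : ℝ => x ^ t) a

/-- The logarithm defined by the continuous functional calculus. -/
noncomputable def clog {A : Type*} [CStarAlgebra A] (a : A) : A :=
  cfc Real.log a

/-- The metric `d(x, y) = ‖log (x^{-1/2} y x^{-1/2})‖` on positive invertible elements. -/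
noncomputable def dd {A : Type*} [CStarAlgebra A] (x y : A) : ℝ :=
  ‖clog (cpow x (-(1/2)) * y * cpow x (-(1/2)))‖

/-- The geodesic `γ_{a,b}(t) = a^{1/2} (a^{-1/2} b a^{-1/2})^t a^{1/2}`. -/
noncomputable def geo {A : Type*} [CStarAlgebra A] (a b : A) (t : ℝ) : A :=
  cpow a (1/2) * cpow (cpow a (-(1/2)) * b * cpow a (-(1/2))) t * cpow a (1/2)

/-- The distance from a point to a subset. -/
noncomputable def distSet {A : Type*} [CStarAlgebra A] (x : A) (C : Set A) : ℝ :=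
  sInf {r : ℝ | ∃ c ∈ C, r = dd x c}

/-- The distance between two subsets. -/
noncomputable def distSets {A : Type*} [CStarAlgebra A] (C D : Set A) : ℝ :=
  sInf {r : ℝ | ∃ x ∈ C, ∃ y ∈ D, r = dd x y}

/-- The orbit `O_H(1) = {h h* : h ∈ H}` of the identity under the action `h · a = h a h*`. -/
def orbitOne {A : Type*} [CStarAlgebra A] (H : Subgroup Aˣ) : Set A :=
  {x : A | ∃ h ∈ H, x = (h : A) * star (h : A)}

/-- The fixed point set `P^H = {a positive invertible : h a h* = a for all h ∈ H}`. -/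
def fixedSet {A : Type*} [CStarAlgebra A] (H : Subgroup Aˣ) : Set A :=
  {a : A | IsPosInv a ∧ ∀ h ∈ H, (h : A) * a * star (h : A) = a}

/-- The similarity number `Sim(H) = inf {‖s‖ ‖s⁻¹‖ : s a unitarizer of H}`. -/
noncomputable def simNum {A : Type*} [CStarAlgebra A] (H : Subgroup Aˣ) : ℝ :=
  sInf {c : ℝ | ∃ s : Aˣ, (∀ h ∈ H, (↑s⁻¹ : A) * (h : A) * (s : A) ∈ unitary A) ∧
    c = ‖(s : A)‖ * ‖(↑s⁻¹ : A)‖}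

/-- The set of norms of elements of `H`; its supremum is the size `|H|`. -/
def normSet {A : Type*} [CStarAlgebra A] (H : Subgroup Aˣ) : Set ℝ :=
  {r : ℝ | ∃ h ∈ H, r = ‖(h : A)‖}

/-- The orbit diameter function `D_H(a) = sup_{h ∈ H} d(a, h a h*)`. -/
noncomputable def orbDiam {A : Type*} [CStarAlgebra A] (H : Subgroup Aˣ) (a : A) : ℝ :=
  sSup {r : ℝ | ∃ h ∈ H, r = dd a ((h : A) * a * star (h : A))}

/-- The size `|p H q| = sup_{h ∈ H} ‖p h q‖` of the conjugated family `p H q`. -/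
noncomputable def sizeConj {A : Type*} [CStarAlgebra A] (H : Subgroup Aˣ) (p q : A) : ℝ :=
  sSup {c : ℝ | ∃ h ∈ H, c = ‖p * (h : A) * q‖}

/-- The similarity number `Sim(p H q)` of the conjugated family `p H q`. -/
noncomputable def simConj {A : Type*} [CStarAlgebra A] (H : Subgroup Aˣ) (p q : A) : ℝ :=
  sInf {c : ℝ | ∃ u : Aˣ, (∀ h ∈ H, (↑u⁻¹ : A) * (p * (h : A) * q) * (u : A) ∈ unitary A) ∧
    c = ‖(u : A)‖ * ‖(↑u⁻¹ : A)‖}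

/-- The geodesic `γ_{r², s²}(t) = r (r⁻¹ s² r⁻¹)^t r` for positive invertible `r`, `s`. -/
noncomputable def gammaRS {A : Type*} [CStarAlgebra A] (r s : Aˣ) (t : ℝ) : A :=
  (r : A) * cpow ((↑r⁻¹ : A) * ((s : A) * (s : A)) * (↑r⁻¹ : A)) t * (r : A)

/-!
For positive invertible `x` and `y`, `d(x, y) ≤ r` means that `x ≤ eʳ y` and `y ≤ eʳ x`. The
geodesic `γ_{a,b}(t)` is monotone in `b` by the Löwner–Heinz inequality, hence also in `a` because
`γ_{a,b}(t) = γ_{b,a}(1 - t)`, and `γ_{ka,lb}(t) = k^{1-t} l^t γ_{a,b}(t)`. Applied to the order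
bounds, this makes `d` convex along pairs of geodesics. Congruences map geodesics to geodesics, so
convexity applies to `γ_{a,b}` and its translate `h γ_{a,b} h*`; it remains to take the supremum
over `h`, which is finite since `H` is bounded and closed under inversion.
-/

section StarConj

variable {R A : Type*}

section Semiring

variable [CommSemiring R] [Semiring A] [StarRing A] [Algebra R A]

variable (R) in
/-- The action `h ↦ (a ↦ h a h*)` of the units of a star algebra by congruences, as a homomorphism
into the linear automorphisms of the algebra. -/
def starConj : Aˣ →* (A ≃ₗ[R] A) where
  toFun h :=
    { toFun a := h * a * star (h : A)
      invFun a := ↑h⁻¹ * a * star (↑h⁻¹ : A)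
      map_add' a b := by rw [mul_add, add_mul]
      map_smul' r a := by simp
      left_inv a := by simp [mul_assoc, ← star_mul]
      right_inv a := by simp [mul_assoc, ← star_mul] }
  map_one' := by ext; simp
  map_mul' h k := by ext; simp [mul_assoc]

lemma starConj_apply (h : Aˣ) (a : A) : starConj R h a = h * a * star (h : A) := rfl

lemma starConj_one_apply (a : A) : starConj R 1 a = a := by
  rw [map_one]
  rfl

lemma starConj_mul_apply (h k : Aˣ) (a : A) :
    starConj R (h * k) a = starConj R h (starConj R k a) := by
  rw [map_mul, LinearEquiv.mul_apply]

lemma starConj_inv_starConj (h : Aˣ) (a : A) : starConj R h⁻¹ (starConj R h a) = a := by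
  rw [← starConj_mul_apply, inv_mul_cancel, starConj_one_apply]

lemma starConj_starConj_inv (h : Aˣ) (a : A) : starConj R h (starConj R h⁻¹ a) = a := by
  rw [← starConj_mul_apply, mul_inv_cancel, starConj_one_apply]

lemma mem_unitary_of_starConj_one_eq_one {u : Aˣ} (hu : starConj R u 1 = 1) :
    (u : A) ∈ unitary A := by
  rw [starConj_apply, mul_one] at hu
  exact u.isUnit.mem_unitary_iff_mul_star_self.2 hu

variable [PartialOrder A] [StarOrderedRing A]

lemma starConj_mono (h : Aˣ) : Monotone (starConj R h) :=
  fun _ _ hab => star_right_conjugate_le_conjugate hab (h : A)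

lemma starConj_le_starConj_iff {h : Aˣ} {a b : A} :
    starConj R h a ≤ starConj R h b ↔ a ≤ b := by
  refine ⟨fun hab => ?_, fun hab => starConj_mono h hab⟩
  simpa only [starConj_inv_starConj] using starConj_mono (R := R) h⁻¹ hab

lemma isStrictlyPositive_starConj (h : Aˣ) {a : A} (ha : IsStrictlyPositive a) :
    IsStrictlyPositive (starConj R h a) :=
  h.isUnit.isStrictlyPositive_star_right_conjugate_iff.2 ha

end Semiring

lemma norm_starConj_le [CommSemiring R] [NormedRing A] [StarRing A] [NormedStarGroup A]
    [Algebra R A] (h : Aˣ) (a : A) : ‖starConj R h a‖ ≤ ‖(h : A)‖ ^ 2 * ‖a‖ :=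
  calc ‖starConj R h a‖ ≤ ‖(h : A)‖ * ‖a‖ * ‖star (h : A)‖ := norm_mul₃_le
    _ = ‖(h : A)‖ ^ 2 * ‖a‖ := by rw [norm_star]; ring

lemma cfc_starConj_of_mem_unitary [CStarAlgebra A] {u : Aˣ} (hu : (u : A) ∈ unitary A)
    {f : ℝ → ℝ} {a : A} (hf : ContinuousOn f (spectrum ℝ a)) (ha : IsSelfAdjoint a) :
    cfc f (starConj ℝ u a) = starConj ℝ u (cfc f a) := by
  have hcont : Continuous (Unitary.conjStarAlgAut ℝ A ⟨u, hu⟩) := by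
    change Continuous fun x : A => (u : A) * x * star (u : A)
    fun_prop
  exact (StarAlgHomClass.map_cfc (Unitary.conjStarAlgAut ℝ A ⟨u, hu⟩) f a hf hcont ha
    (ha.map _)).symm

end StarConj

section Geodesic

variable {A : Type*} [CStarAlgebra A] [PartialOrder A] [StarOrderedRing A]

lemma isPosInv_iff_isStrictlyPositive {a : A} : IsPosInv a ↔ IsStrictlyPositive a :=
  CStarAlgebra.isStrictlyPositive_iff_isSelfAdjoint_and_spectrum_pos.symm

lemma cpow_eq_rpow {a : A} (ha : 0 ≤ a) (t : ℝ) : cpow a t = a ^ t :=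
  (CFC.rpow_eq_cfc_real (ha := ha)).symm

lemma continuousOn_rpow_const_spectrum {a : A} (ha : IsStrictlyPositive a) (t : ℝ) :
    ContinuousOn (fun x : ℝ => x ^ t) (spectrum ℝ a) := fun _ hx =>
  (Real.continuousAt_rpow_const _ t (.inl (ha.spectrum_pos hx).ne')).continuousWithinAt

lemma smul_rpow {k : ℝ} (hk : 0 < k) {a : A} (ha : IsStrictlyPositive a) (t : ℝ) :
    (k • a) ^ t = k ^ t • a ^ t := by
  have hpow := continuousOn_rpow_const_spectrum ha t
  calc (k • a) ^ t = (cfc (fun x : ℝ => k • x) a) ^ t := by rw [cfc_smul_id k a ha.isSelfAdjoint]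
    _ = cfc (fun x : ℝ => (k • x) ^ t) a :=
        CFC.cfc_rpow fun x hx => mul_pos hk (ha.spectrum_pos hx)
    _ = cfc (fun x : ℝ => k ^ t • x ^ t) a :=
        cfc_congr fun x hx => Real.mul_rpow hk.le (ha.spectrum_pos hx).le
    _ = k ^ t • a ^ t := by rw [cfc_smul _ _ a hpow, CFC.rpow_eq_cfc_real (ha := ha.nonneg)]

lemma rpow_starConj_of_mem_unitary {u : Aˣ} (hu : (u : A) ∈ unitary A) {a : A}
    (ha : IsStrictlyPositive a) (t : ℝ) :
    (starConj ℝ u a) ^ t = starConj ℝ u (a ^ t) := by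
  rw [CFC.rpow_eq_cfc_real (ha := ha.nonneg),
    CFC.rpow_eq_cfc_real (ha := (isStrictlyPositive_starConj u ha).nonneg)]
  exact cfc_starConj_of_mem_unitary hu (continuousOn_rpow_const_spectrum ha t) ha.isSelfAdjoint

/-- The positive square root `a^{1/2}` of a strictly positive element, as a unit. -/
noncomputable def sqrtUnit {a : A} (ha : IsStrictlyPositive a) : Aˣ :=
  ha.isUnit.unit.cfcRpow (1 / 2) ha.nonneg

lemma starConj_sqrtUnit {a : A} (ha : IsStrictlyPositive a) (b : A) :
    starConj ℝ (sqrtUnit ha) b = a ^ (1 / 2 : ℝ) * b * a ^ (1 / 2 : ℝ) :=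
  congrArg (a ^ (1 / 2 : ℝ) * b * ·) (IsSelfAdjoint.of_nonneg CFC.rpow_nonneg).star_eq

lemma starConj_sqrtUnit_inv {a : A} (ha : IsStrictlyPositive a) (b : A) :
    starConj ℝ (sqrtUnit ha)⁻¹ b = a ^ (-(1 / 2) : ℝ) * b * a ^ (-(1 / 2) : ℝ) :=
  congrArg (a ^ (-(1 / 2) : ℝ) * b * ·) (IsSelfAdjoint.of_nonneg CFC.rpow_nonneg).star_eq

lemma starConj_sqrtUnit_rpow {a : A} (ha : IsStrictlyPositive a) (t : ℝ) :
    starConj ℝ (sqrtUnit ha) (a ^ t) = a ^ (t + 1) := by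
  rw [starConj_sqrtUnit, ← CFC.rpow_add ha.isUnit, ← CFC.rpow_add ha.isUnit]
  ring_nf

lemma starConj_sqrtUnit_one {a : A} (ha : IsStrictlyPositive a) :
    starConj ℝ (sqrtUnit ha) 1 = a := by
  simpa [CFC.rpow_zero a, CFC.rpow_one a] using starConj_sqrtUnit_rpow ha 0

lemma starConj_sqrtUnit_inv_self {a : A} (ha : IsStrictlyPositive a) :
    starConj ℝ (sqrtUnit ha)⁻¹ a = 1 := by
  rw [starConj_sqrtUnit_inv, CFC.conjugate_rpow_neg_one_half a]

lemma geo_eq_starConj_sqrtUnit {a b : A} (ha : IsStrictlyPositive a) (hb : IsStrictlyPositive b)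
    (t : ℝ) :
    geo a b t = starConj ℝ (sqrtUnit ha) ((starConj ℝ (sqrtUnit ha)⁻¹ b) ^ t) := by
  have hc := isStrictlyPositive_starConj (R := ℝ) (sqrtUnit ha)⁻¹ hb
  rw [starConj_sqrtUnit_inv] at hc ⊢
  rw [geo, cpow_eq_rpow ha.nonneg, cpow_eq_rpow ha.nonneg, cpow_eq_rpow hc.nonneg,
    starConj_sqrtUnit]

-- By polar decomposition, two factorizations `a = x x*` differ by a unitary, and conjugation by a
-- unitary commutes with the functional calculus.
lemma geo_eq_of_starConj_one {x : Aˣ} {a b : A} (hx : starConj ℝ x 1 = a)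
    (hb : IsStrictlyPositive b) (t : ℝ) :
    geo a b t = starConj ℝ x ((starConj ℝ x⁻¹ b) ^ t) := by
  have ha : IsStrictlyPositive a := hx ▸ isStrictlyPositive_starConj x isStrictlyPositive_one
  set s := sqrtUnit ha
  obtain ⟨u, rfl⟩ : ∃ u, s * u = x := ⟨s⁻¹ * x, mul_inv_cancel_left s x⟩
  have hu : (u : A) ∈ unitary A := mem_unitary_of_starConj_one_eq_one (R := ℝ) <| by
    rw [← starConj_inv_starConj (R := ℝ) s (starConj ℝ u 1), ← starConj_mul_apply s u, hx,
      starConj_sqrtUnit_inv_self]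
  have hc : IsStrictlyPositive (starConj ℝ (s * u)⁻¹ b) := isStrictlyPositive_starConj _ hb
  calc geo a b t = starConj ℝ s ((starConj ℝ s⁻¹ b) ^ t) := geo_eq_starConj_sqrtUnit ha hb t
    _ = starConj ℝ s ((starConj ℝ u (starConj ℝ (s * u)⁻¹ b)) ^ t) := by
        rw [mul_inv_rev, starConj_mul_apply, starConj_starConj_inv]
    _ = starConj ℝ (s * u) ((starConj ℝ (s * u)⁻¹ b) ^ t) := by
        rw [rpow_starConj_of_mem_unitary hu hc, starConj_mul_apply]

lemma isStrictlyPositive_geo {a b : A} (ha : IsStrictlyPositive a) (hb : IsStrictlyPositive b)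
    (t : ℝ) : IsStrictlyPositive (geo a b t) := by
  rw [geo_eq_starConj_sqrtUnit ha hb]
  exact isStrictlyPositive_starConj _ (.rpow _ t (isStrictlyPositive_starConj _ hb))

lemma starConj_geo (h : Aˣ) {a b : A} (ha : IsStrictlyPositive a) (hb : IsStrictlyPositive b)
    (t : ℝ) : starConj ℝ h (geo a b t) = geo (starConj ℝ h a) (starConj ℝ h b) t := by
  have hx : starConj ℝ (h * sqrtUnit ha) 1 = starConj ℝ h a := by
    rw [starConj_mul_apply, starConj_sqrtUnit_one]
  rw [geo_eq_of_starConj_one hx (isStrictlyPositive_starConj h hb),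
    geo_eq_starConj_sqrtUnit ha hb, mul_inv_rev, starConj_mul_apply, starConj_mul_apply,
    starConj_inv_starConj]

lemma geo_one_left {a : A} (ha : IsStrictlyPositive a) (t : ℝ) : geo 1 a t = a ^ t := by
  rw [geo_eq_of_starConj_one (starConj_one_apply 1) ha, inv_one, starConj_one_apply,
    starConj_one_apply]

lemma geo_one_right {a : A} (ha : IsStrictlyPositive a) (t : ℝ) :
    geo a 1 t = a ^ (1 - t) := by
  have hinv : starConj ℝ (sqrtUnit ha)⁻¹ 1 = a ^ (-1 : ℝ) := by
    rw [starConj_sqrtUnit_inv, mul_one, ← CFC.rpow_add ha.isUnit]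
    norm_num
  rw [geo_eq_starConj_sqrtUnit ha isStrictlyPositive_one, hinv,
    CFC.rpow_rpow a (-1) t (by norm_num) ha, starConj_sqrtUnit_rpow]
  ring_nf

-- A congruence moves `a` to `1`, where both sides are powers of a single element.
lemma geo_symm {a b : A} (ha : IsStrictlyPositive a) (hb : IsStrictlyPositive b) (t : ℝ) :
    geo a b t = geo b a (1 - t) := by
  set s := sqrtUnit ha
  set c := starConj ℝ s⁻¹ b
  have hc : IsStrictlyPositive c := isStrictlyPositive_starConj _ hb
  have hsa : starConj ℝ s 1 = a := starConj_sqrtUnit_one ha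
  have hsb : starConj ℝ s c = b := starConj_starConj_inv s b
  rw [← hsa, ← hsb, ← starConj_geo s isStrictlyPositive_one hc,
    ← starConj_geo s hc isStrictlyPositive_one, geo_one_left hc, geo_one_right hc, sub_sub_cancel]

lemma geo_le_geo_right {a b b' : A} (ha : IsStrictlyPositive a) (hb : IsStrictlyPositive b)
    (h : b ≤ b') {t : ℝ} (ht : t ∈ Set.Icc (0 : ℝ) 1) : geo a b t ≤ geo a b' t := by
  rw [geo_eq_starConj_sqrtUnit ha hb, geo_eq_starConj_sqrtUnit ha (hb.of_le h)]
  exact starConj_mono _ (CFC.rpow_le_rpow ht (starConj_mono _ h))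

lemma geo_le_geo {a a' b b' : A} (ha : IsStrictlyPositive a) (hb : IsStrictlyPositive b)
    (haa' : a ≤ a') (hbb' : b ≤ b') {t : ℝ} (ht : t ∈ Set.Icc (0 : ℝ) 1) :
    geo a b t ≤ geo a' b' t := by
  have hb' := hb.of_le hbb'
  calc geo a b t ≤ geo a b' t := geo_le_geo_right ha hb hbb' ht
    _ = geo b' a (1 - t) := geo_symm ha hb' t
    _ ≤ geo b' a' (1 - t) := geo_le_geo_right hb' ha haa' (Set.Icc.mem_iff_one_sub_mem.1 ht)
    _ = geo a' b' t := (geo_symm (ha.of_le haa') hb' t).symm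

lemma geo_smul_right {k : ℝ} (hk : 0 < k) {a b : A} (ha : IsStrictlyPositive a)
    (hb : IsStrictlyPositive b) (t : ℝ) : geo a (k • b) t = k ^ t • geo a b t := by
  rw [geo_eq_starConj_sqrtUnit ha (hb.smul hk), geo_eq_starConj_sqrtUnit ha hb, map_smul,
    smul_rpow hk (isStrictlyPositive_starConj _ hb), map_smul]

lemma geo_smul_smul {k l : ℝ} (hk : 0 < k) (hl : 0 < l) {a b : A} (ha : IsStrictlyPositive a)
    (hb : IsStrictlyPositive b) (t : ℝ) :
    geo (k • a) (l • b) t = (k ^ (1 - t) * l ^ t) • geo a b t := by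
  rw [geo_smul_right hl (ha.smul hk) hb, geo_symm (ha.smul hk) hb, geo_smul_right hk hb ha,
    ← geo_symm ha hb, smul_smul, mul_comm]

lemma geo_le_exp_smul_geo {a a' b b' : A} (ha : IsStrictlyPositive a)
    (hb : IsStrictlyPositive b) (ha' : IsStrictlyPositive a') (hb' : IsStrictlyPositive b')
    {r s : ℝ} (haa' : a ≤ Real.exp r • a') (hbb' : b ≤ Real.exp s • b') {t : ℝ}
    (ht : t ∈ Set.Icc (0 : ℝ) 1) :
    geo a b t ≤ Real.exp ((1 - t) * r + t * s) • geo a' b' t := by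
  have hexp : Real.exp r ^ (1 - t) * Real.exp s ^ t = Real.exp ((1 - t) * r + t * s) := by
    rw [← Real.exp_mul, ← Real.exp_mul, ← Real.exp_add, mul_comm r, mul_comm s]
  calc geo a b t ≤ geo (Real.exp r • a') (Real.exp s • b') t := geo_le_geo ha hb haa' hbb' ht
    _ = Real.exp ((1 - t) * r + t * s) • geo a' b' t := by
        rw [geo_smul_smul (Real.exp_pos r) (Real.exp_pos s) ha' hb', hexp]

end Geodesic

section Metric

variable {A : Type*} [CStarAlgebra A] [PartialOrder A] [StarOrderedRing A]

lemma norm_clog_le_iff {a : A} (ha : IsStrictlyPositive a) {r : ℝ} (hr : 0 ≤ r) :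
    ‖clog a‖ ≤ r ↔ 1 ≤ Real.exp r • a ∧ a ≤ Real.exp r • (1 : A) := by
  have hlog : ContinuousOn Real.log (spectrum ℝ a) :=
    Real.continuousOn_log.mono fun x hx => (ha.spectrum_pos hx).ne'
  rw [← inv_smul_le_iff_of_pos (Real.exp_pos r), ← Real.exp_neg,
    ← Algebra.algebraMap_eq_smul_one, ← Algebra.algebraMap_eq_smul_one,
    algebraMap_le_iff_le_spectrum ha.isSelfAdjoint, le_algebraMap_iff_spectrum_le ha.isSelfAdjoint,
    clog, norm_cfc_le_iff _ _ hr hlog ha.isSelfAdjoint, ← forall₂_and]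
  refine forall₂_congr fun x hx => ?_
  have hx0 : 0 < x := ha.spectrum_pos hx
  rw [Real.norm_eq_abs, abs_le, Real.le_log_iff_exp_le hx0, Real.log_le_iff_le_exp hx0]

lemma dd_le_iff {a b : A} (ha : IsStrictlyPositive a) (hb : IsStrictlyPositive b) {r : ℝ}
    (hr : 0 ≤ r) : dd a b ≤ r ↔ a ≤ Real.exp r • b ∧ b ≤ Real.exp r • a := by
  set s := sqrtUnit ha
  have hdd : dd a b = ‖clog (starConj ℝ s⁻¹ b)‖ := by
    rw [dd, cpow_eq_rpow ha.nonneg, starConj_sqrtUnit_inv]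
  rw [hdd, norm_clog_le_iff (isStrictlyPositive_starConj _ hb) hr,
    ← starConj_sqrtUnit_inv_self ha, ← map_smul, ← map_smul, starConj_le_starConj_iff,
    starConj_le_starConj_iff]

lemma dd_geo_geo_le {a a' b b' : A} (ha : IsStrictlyPositive a) (ha' : IsStrictlyPositive a')
    (hb : IsStrictlyPositive b) (hb' : IsStrictlyPositive b') {t : ℝ}
    (ht : t ∈ Set.Icc (0 : ℝ) 1) :
    dd (geo a b t) (geo a' b' t) ≤ (1 - t) * dd a a' + t * dd b b' := by
  have hda : 0 ≤ dd a a' := norm_nonneg _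
  have hdb : 0 ≤ dd b b' := norm_nonneg _
  have hr : 0 ≤ (1 - t) * dd a a' + t * dd b b' :=
    add_nonneg (mul_nonneg (sub_nonneg.2 ht.2) hda) (mul_nonneg ht.1 hdb)
  obtain ⟨haa', ha'a⟩ := (dd_le_iff ha ha' hda).1 le_rfl
  obtain ⟨hbb', hb'b⟩ := (dd_le_iff hb hb' hdb).1 le_rfl
  exact (dd_le_iff (isStrictlyPositive_geo ha hb t) (isStrictlyPositive_geo ha' hb' t) hr).2
    ⟨geo_le_exp_smul_geo ha hb ha' hb' haa' hbb' ht, geo_le_exp_smul_geo ha' hb' ha hb ha'a hb'b ht⟩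

end Metric

section Orbit

variable {A : Type*}

lemma orbDiam_le [CStarAlgebra A] {H : Subgroup Aˣ} {a : A} {r : ℝ}
    (hr : ∀ h ∈ H, dd a (starConj ℝ h a) ≤ r) : orbDiam H a ≤ r := by
  refine csSup_le ⟨_, 1, H.one_mem, rfl⟩ ?_
  rintro _ ⟨h, hh, rfl⟩
  exact hr h hh

variable [CStarAlgebra A] [PartialOrder A] [StarOrderedRing A]

lemma le_smul_starConj_one (x : Aˣ) {b : A} (hb : IsSelfAdjoint b) :
    b ≤ (‖(↑x⁻¹ : A)‖ ^ 2 * ‖b‖) • starConj ℝ x 1 := by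
  set c := starConj ℝ x⁻¹ b
  have hc : IsSelfAdjoint c := hb.conjugate _
  calc b = starConj ℝ x c := (starConj_starConj_inv x b).symm
    _ ≤ starConj ℝ x ((‖(↑x⁻¹ : A)‖ ^ 2 * ‖b‖) • 1) := starConj_mono x <|
        hc.le_algebraMap_norm_self.trans <| by
          rw [Algebra.algebraMap_eq_smul_one]
          exact smul_le_smul_of_nonneg_right (norm_starConj_le x⁻¹ b) zero_le_one
    _ = (‖(↑x⁻¹ : A)‖ ^ 2 * ‖b‖) • starConj ℝ x 1 := map_smul _ _ _

lemma exists_forall_starConj_le_smul {H : Subgroup Aˣ} (hbdd : BddAbove (normSet H)) {a : A}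
    (ha : IsStrictlyPositive a) : ∃ C : ℝ, 0 ≤ C ∧ ∀ h ∈ H, starConj ℝ h a ≤ C • a := by
  obtain ⟨M, hM⟩ := hbdd
  set s := sqrtUnit ha
  refine ⟨‖(↑s⁻¹ : A)‖ ^ 2 * (M ^ 2 * ‖a‖), by positivity, fun h hh => ?_⟩
  have hhM : ‖(h : A)‖ ≤ M := hM ⟨h, hh, rfl⟩
  calc starConj ℝ h a ≤ (‖(↑s⁻¹ : A)‖ ^ 2 * ‖starConj ℝ h a‖) • starConj ℝ s 1 :=
        le_smul_starConj_one s (isStrictlyPositive_starConj h ha).isSelfAdjoint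
    _ = (‖(↑s⁻¹ : A)‖ ^ 2 * ‖starConj ℝ h a‖) • a := by rw [starConj_sqrtUnit_one ha]
    _ ≤ (‖(↑s⁻¹ : A)‖ ^ 2 * (M ^ 2 * ‖a‖)) • a := by
        refine smul_le_smul_of_nonneg_right ?_ ha.nonneg
        gcongr
        exact (norm_starConj_le h a).trans (by gcongr)

lemma bddAbove_dd_starConj {H : Subgroup Aˣ} (hbdd : BddAbove (normSet H)) {a : A}
    (ha : IsStrictlyPositive a) : BddAbove {r : ℝ | ∃ h ∈ H, r = dd a (starConj ℝ h a)} := by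
  obtain ⟨C, hC, hCa⟩ := exists_forall_starConj_le_smul hbdd ha
  have le_exp_smul {b c : A} (hc : 0 ≤ c) (hbc : b ≤ C • c) : b ≤ Real.exp C • c :=
    hbc.trans <| smul_le_smul_of_nonneg_right (by linarith [Real.add_one_le_exp C]) hc
  refine ⟨C, ?_⟩
  rintro _ ⟨h, hh, rfl⟩
  have hha : IsStrictlyPositive (starConj ℝ h a) := isStrictlyPositive_starConj h ha
  have hinv : a ≤ C • starConj ℝ h a := by
    rw [← starConj_le_starConj_iff (R := ℝ) (h := h⁻¹), map_smul, starConj_inv_starConj]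
    exact hCa h⁻¹ (H.inv_mem hh)
  exact (dd_le_iff ha hha hC).2
    ⟨le_exp_smul hha.nonneg hinv, le_exp_smul ha.nonneg (hCa h hh)⟩

lemma dd_starConj_le_orbDiam {H : Subgroup Aˣ} (hbdd : BddAbove (normSet H)) {a : A}
    (ha : IsStrictlyPositive a) {h : Aˣ} (hh : h ∈ H) : dd a (starConj ℝ h a) ≤ orbDiam H a :=
  le_csSup (bddAbove_dd_starConj hbdd ha) ⟨h, hh, rfl⟩

end Orbit

/-- The orbit diameter function `D_H` is geodesically convex. -/
theorem stmt9 {A : Type*} [CStarAlgebra A] (H : Subgroup Aˣ)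
    (hbdd : BddAbove (normSet H)) (a b : A) (ha : IsPosInv a) (hb : IsPosInv b)
    (t : ℝ) (ht : t ∈ Set.Icc (0 : ℝ) 1) :
    orbDiam H (geo a b t) ≤ (1 - t) * orbDiam H a + t * orbDiam H b := by
  let _ : PartialOrder A := CStarAlgebra.spectralOrder A
  have _ : StarOrderedRing A := CStarAlgebra.spectralOrderedRing A
  rw [isPosInv_iff_isStrictlyPositive] at ha hb
  refine orbDiam_le fun h hh => ?_
  calc dd (geo a b t) (starConj ℝ h (geo a b t))
      = dd (geo a b t) (geo (starConj ℝ h a) (starConj ℝ h b) t) := by rw [starConj_geo h ha hb]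
    _ ≤ (1 - t) * dd a (starConj ℝ h a) + t * dd b (starConj ℝ h b) :=
        dd_geo_geo_le ha (isStrictlyPositive_starConj h ha) hb (isStrictlyPositive_starConj h hb) ht
    _ ≤ (1 - t) * orbDiam H a + t * orbDiam H b :=
        add_le_add
          (mul_le_mul_of_nonneg_left (dd_starConj_le_orbDiam hbdd ha hh) (sub_nonneg.2 ht.2))
          (mul_le_mul_of_nonneg_left (dd_starConj_le_orbDiam hbdd hb hh) ht.1)
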